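/- Let u, v : ℝ_{≥0} → ℝ^d be continuous with θ_t = u_t ⊙ v_t. Assume that (u_t, v_t) → (u_∞, v_∞) as t → ∞, that ∇L(θ_t) ⊙ v_t → 0 and ∇L(θ_t) ⊙ u_t → 0 as t → ∞, that the interpolator set S is nonempty, and that Δ_∞ = |u_∞² − v_∞²| has strictly positive coordinates. Then ∇L(u_∞ ⊙ v_∞) = 0, L(u_∞ ⊙ v_∞) = 0, and the limit predictor θ_∞ = u_∞ ⊙ v_∞ belongs to S, i.e., it interpolates the dataset. -/

import Mathlib

open Real Filter

open scoped RealInnerProductSpace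

/-!
Since `∇L` is continuous, passing to the limit in `∇L(θ_t) ⊙ v_t → 0` and `∇L(θ_t) ⊙ u_t → 0`
gives `∇L(θ_∞) ⊙ v_∞ = ∇L(θ_∞) ⊙ u_∞ = 0`. In each coordinate `u_∞` or `v_∞` is nonzero, so
`∇L(θ_∞) = 0`. For an interpolator `s`, Euler's identity for the quadratic form centred at `s`
reads `⟪∇L(θ), θ - s⟫ = 2 L(θ)`, so a critical point of `L` has zero loss.
-/

section QuadraticLoss

variable {ι E : Type*} [NormedAddCommGroup E] [InnerProductSpace ℝ E]

/-- The set of linear predictors that fit every data point `(x i, y i)` exactly. -/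
def interpolators (x : ι → E) (y : ι → ℝ) : Set E :=
  {θ | ∀ i, ⟪x i, θ⟫ = y i}

variable [Fintype ι]

/-- The quadratic loss of the linear predictor `θ` on the data `(x i, y i)`, namely half of the
mean squared error. It is zero on an empty data set, where `1 / 0 = 0`. -/
noncomputable def quadraticLoss (x : ι → E) (y : ι → ℝ) (θ : E) : ℝ :=
  (1 / (2 * (Fintype.card ι : ℝ))) * ∑ i, (y i - ⟪x i, θ⟫) ^ 2

variable {x : ι → E} {y : ι → ℝ} {θ s : E}

theorem quadraticLoss_eq_zero_iff : quadraticLoss x y θ = 0 ↔ θ ∈ interpolators x y := by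
  rcases isEmpty_or_nonempty ι with _ | _
  · simp [quadraticLoss, interpolators]
  · have hscale : 1 / (2 * (Fintype.card ι : ℝ)) ≠ 0 := by positivity
    rw [quadraticLoss, mul_eq_zero_iff_left hscale,
      Finset.sum_eq_zero_iff_of_nonneg fun i _ => sq_nonneg _]
    simp [interpolators, sub_eq_zero, eq_comm]

variable [CompleteSpace E]

theorem hasGradientAt_quadraticLoss (x : ι → E) (y : ι → ℝ) (θ : E) :
    HasGradientAt (quadraticLoss x y)
      ((Fintype.card ι : ℝ)⁻¹ • ∑ i, (⟪x i, θ⟫ - y i) • x i) θ := by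
  have hsq (i : ι) : HasFDerivAt (fun w => (y i - ⟪x i, w⟫) ^ 2)
      ((2 * (y i - ⟪x i, θ⟫)) • -innerSL ℝ (x i)) θ := by
    simpa using (((innerSL ℝ (x i)).hasFDerivAt (x := θ)).const_sub (y i)).pow 2
  have hsum := (HasFDerivAt.fun_sum fun i (_ : i ∈ Finset.univ) => hsq i).const_mul
    (1 / (2 * (Fintype.card ι : ℝ)))
  refine hasGradientAt_iff_hasFDerivAt.mpr (hsum.congr_fderiv ?_)
  ext z
  simp only [one_div, mul_inv, smul_apply, sum_apply,
    neg_apply, innerSL_apply_apply, InnerProductSpace.toDual_apply_apply,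
    sum_inner, real_inner_smul_left, smul_eq_mul, Finset.mul_sum]
  exact Finset.sum_congr rfl fun i _ => by ring

theorem gradient_quadraticLoss (x : ι → E) (y : ι → ℝ) (θ : E) :
    gradient (quadraticLoss x y) θ =
      (Fintype.card ι : ℝ)⁻¹ • ∑ i, (⟪x i, θ⟫ - y i) • x i :=
  (hasGradientAt_quadraticLoss x y θ).gradient

theorem continuous_gradient_quadraticLoss (x : ι → E) (y : ι → ℝ) :
    Continuous (gradient (quadraticLoss x y)) := by
  simp only [funext (gradient_quadraticLoss x y)]
  fun_prop

theorem inner_gradient_quadraticLoss_sub (hs : s ∈ interpolators x y) (θ : E) :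
    ⟪gradient (quadraticLoss x y) θ, θ - s⟫ = 2 * quadraticLoss x y θ := by
  have hterm (i : ι) : ⟪(⟪x i, θ⟫ - y i) • x i, θ - s⟫ = (y i - ⟪x i, θ⟫) ^ 2 := by
    rw [real_inner_smul_left, inner_sub_right, hs i]
    ring
  rw [gradient_quadraticLoss, real_inner_smul_left, sum_inner, quadraticLoss,
    Finset.sum_congr rfl fun i _ => hterm i]
  ring

theorem quadraticLoss_eq_zero_of_gradient_eq_zero (hne : (interpolators x y).Nonempty)
    (hθ : gradient (quadraticLoss x y) θ = 0) : quadraticLoss x y θ = 0 := by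
  obtain ⟨s, hs⟩ := hne
  have h := inner_gradient_quadraticLoss_sub hs θ
  rw [hθ, inner_zero_left] at h
  linarith

end QuadraticLoss

section HadamardLimits

variable {α κ R : Type*} {p : ENNReal} {l : Filter α} [TopologicalSpace R]
  {u v w : α → PiLp p fun _ : κ => R} {a b c : PiLp p fun _ : κ => R}

theorem tendsto_piLp_apply (hu : Tendsto u l (nhds a)) (i : κ) :
    Tendsto (fun t => u t i) l (nhds (a i)) :=
  ((PiLp.continuous_apply p (fun _ : κ => R) i).tendsto a).comp hu

theorem tendsto_piLp_of_apply_eq_mul [Mul R] [ContinuousMul R]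
    (hu : Tendsto u l (nhds a)) (hv : Tendsto v l (nhds b))
    (hw : ∀ t i, w t i = u t i * v t i) (hc : ∀ i, c i = a i * b i) :
    Tendsto w l (nhds c) := by
  have hcoord : Tendsto (fun t => WithLp.ofLp (w t)) l (nhds (WithLp.ofLp c)) := by
    simp only [tendsto_pi_nhds, hw, hc]
    exact fun i => (tendsto_piLp_apply hu i).mul (tendsto_piLp_apply hv i)
  exact ((PiLp.continuous_toLp p fun _ : κ => R).tendsto _).comp hcoord

theorem piLp_apply_eq_mul_of_tendsto [Mul R] [ContinuousMul R] [T2Space R] [l.NeBot]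
    (hu : Tendsto u l (nhds a)) (hv : Tendsto v l (nhds b)) (hw : Tendsto w l (nhds c))
    (hwuv : ∀ t i, w t i = u t i * v t i) (i : κ) : c i = a i * b i :=
  tendsto_nhds_unique (tendsto_piLp_apply hw i) <| by
    simpa only [hwuv] using (tendsto_piLp_apply hu i).mul (tendsto_piLp_apply hv i)

end HadamardLimits

theorem stmt_8_general {α ι κ : Type*} [Fintype ι] [Fintype κ] {l : Filter α} [l.NeBot]
    {x : ι → EuclideanSpace ℝ κ} {y : ι → ℝ} (hne : (interpolators x y).Nonempty)
    {u v θ Gv Gu : α → EuclideanSpace ℝ κ} {ulim vlim θlim : EuclideanSpace ℝ κ}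
    (hu : Tendsto u l (nhds ulim)) (hv : Tendsto v l (nhds vlim))
    (hθ : ∀ t i, θ t i = u t i * v t i) (hθlim : ∀ i, θlim i = ulim i * vlim i)
    (hGv : ∀ t i, Gv t i = gradient (quadraticLoss x y) (θ t) i * v t i)
    (hGu : ∀ t i, Gu t i = gradient (quadraticLoss x y) (θ t) i * u t i)
    (hGv0 : Tendsto Gv l (nhds 0)) (hGu0 : Tendsto Gu l (nhds 0))
    (hlim : ∀ i, ulim i ≠ 0 ∨ vlim i ≠ 0) :
    gradient (quadraticLoss x y) θlim = 0 ∧ quadraticLoss x y θlim = 0 ∧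
      θlim ∈ interpolators x y := by
  have hgrad : Tendsto (fun t => gradient (quadraticLoss x y) (θ t)) l
      (nhds (gradient (quadraticLoss x y) θlim)) :=
    ((continuous_gradient_quadraticLoss x y).tendsto θlim).comp
      (tendsto_piLp_of_apply_eq_mul hu hv hθ hθlim)
  have hcrit : gradient (quadraticLoss x y) θlim = 0 := by
    ext i
    have hgv := piLp_apply_eq_mul_of_tendsto hgrad hv hGv0 hGv i
    have hgu := piLp_apply_eq_mul_of_tendsto hgrad hu hGu0 hGu i
    rcases hlim i with hui | hvi
    · exact (mul_eq_zero_iff_right hui).mp hgu.symm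
    · exact (mul_eq_zero_iff_right hvi).mp hgv.symm
  have hloss := quadraticLoss_eq_zero_of_gradient_eq_zero hne hcrit
  exact ⟨hcrit, hloss, quadraticLoss_eq_zero_iff.mp hloss⟩

/-- If `(u_t, v_t) → (u_∞, v_∞)`, `∇L(θ_t) ⊙ v_t → 0`, `∇L(θ_t) ⊙ u_t → 0`,
the interpolator set `S` is nonempty and `Δ_∞ = |u_∞² − v_∞²|` has strictly positive
coordinates, then `∇L(u_∞ ⊙ v_∞) = 0`, `L(u_∞ ⊙ v_∞) = 0`, and `θ_∞ = u_∞ ⊙ v_∞ ∈ S`. -/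
theorem stmt_8 {n d : ℕ}
    (x : Fin n → EuclideanSpace ℝ (Fin d)) (y : Fin n → ℝ)
    (L : EuclideanSpace ℝ (Fin d) → ℝ)
    (hL : L = fun θ => (1 / (2 * (n : ℝ))) * ∑ i, (y i - ⟪x i, θ⟫) ^ 2)
    (S : Set (EuclideanSpace ℝ (Fin d)))
    (hS : S = {θ | ∀ i, ⟪x i, θ⟫ = y i})
    (hSne : S.Nonempty)
    (u v : ℝ → EuclideanSpace ℝ (Fin d)) (hcu : Continuous u) (hcv : Continuous v)
    (θ : ℝ → EuclideanSpace ℝ (Fin d)) (hθ : ∀ t i, θ t i = u t i * v t i)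
    (ulim vlim : EuclideanSpace ℝ (Fin d))
    (hu : Tendsto u atTop (nhds ulim)) (hv : Tendsto v atTop (nhds vlim))
    (Gv Gu : ℝ → EuclideanSpace ℝ (Fin d))
    (hGv : ∀ t i, Gv t i = gradient L (θ t) i * v t i)
    (hGu : ∀ t i, Gu t i = gradient L (θ t) i * u t i)
    (hGv0 : Tendsto Gv atTop (nhds 0)) (hGu0 : Tendsto Gu atTop (nhds 0))
    (θlim : EuclideanSpace ℝ (Fin d)) (hθlim : ∀ i, θlim i = ulim i * vlim i)
    (hΔ : ∀ i, 0 < |ulim i ^ 2 - vlim i ^ 2|) :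
    gradient L θlim = 0 ∧ L θlim = 0 ∧ θlim ∈ S := by
  obtain rfl : L = quadraticLoss x y := by
    simpa only [funext_iff, quadraticLoss, Fintype.card_fin] using hL
  obtain rfl : S = interpolators x y := hS
  exact stmt_8_general hSne hu hv hθ hθlim hGv hGu hGv0 hGu0 fun i =>
    not_and_or.mp fun hzero => (hΔ i).ne' (by simp [hzero])
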